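/- arXiv:2406.14451 — 5 statements merged into one kernel-verified Lean document; each statement's English description precedes it below -/
import Mathlib

section
/- Let X and Y be measurable spaces, Q a Markov kernel from X to Y, γ : Y → X a measurable map, and R the deterministic kernel from Y to X given by R(·|y) = δ_{γ(y)}. Set K = Q⨟R (a kernel on X) and K' = R⨟Q (a kernel on Y). Let φ be a σ-finite measure on X such that for every x ∈ X, φ is absolutely continuous with respect to the measure A ↦ Σ_{n=0}^∞ 2^{−n} K^n(A|x). Then for every y ∈ Y, the measure φQ on Y is absolutely continuous with respect to the measure A ↦ Σ_{n=0}^∞ 2^{−n} (K')^n(A|y). -/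
open ProbabilityTheory MeasureTheory ENNReal

/-- Iterates of a Markov kernel: `kernelIter K 0` is the identity (Dirac) kernel and
`kernelIter K (n+1) = K ∘ₖ kernelIter K n`. -/
noncomputable def kernelIter {X : Type*} [MeasurableSpace X] (K : Kernel X X) : ℕ → Kernel X X
  | 0 => Kernel.id
  | n + 1 => K ∘ₖ kernelIter K n

/-- The kernelResolvent measure `A ↦ ∑_{n=0}^∞ 2^{-n} K^n(A | x)` of a kernel `K` at the point `x`. -/
noncomputable def kernelResolvent {X : Type*} [MeasurableSpace X] (K : Kernel X X) (x : X) :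
    Measure X :=
  Measure.sum fun n : ℕ => ((2 : ℝ≥0∞)⁻¹ ^ n) • kernelIter K n x

theorem kernelIter_comp_succ {X Y : Type*} [MeasurableSpace X] [MeasurableSpace Y]
    (Q : Kernel X Y) (R : Kernel Y X) (n : ℕ) :
    kernelIter (Q ∘ₖ R) (n + 1) = Q ∘ₖ (kernelIter (R ∘ₖ Q) n ∘ₖ R) := by
  induction n with
  | zero => simp [kernelIter]
  | succ n ih =>
    rw [kernelIter, ih]
    simp only [kernelIter, Kernel.comp_assoc]

/-- **Inheriting φ-irreducibility.**
Let `Q` be a Markov kernel from `X` to `Y`, `γ : Y → X` measurable, and `R` the deterministic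
kernel `R(·|y) = δ_{γ(y)}`.  Set `K = Q⨟R = R ∘ₖ Q` (a kernel on `X`) and
`K' = R⨟Q = Q ∘ₖ R` (a kernel on `Y`).  If the σ-finite measure `φ` on `X` is absolutely
continuous with respect to the kernelResolvent `∑_n 2^{-n} K^n(·|x)` for every `x`, then `φQ` is
absolutely continuous with respect to the kernelResolvent `∑_n 2^{-n} (K')^n(·|y)` for every `y`. -/
theorem absolutelyContinuous_bind_kernelResolvent {X Y : Type*} [MeasurableSpace X] [MeasurableSpace Y]
    (Q : Kernel X Y) [IsMarkovKernel Q] (γ : Y → X) (hγ : Measurable γ)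
    (φ : Measure X) [SigmaFinite φ]
    (habs : ∀ x : X, φ ≪ kernelResolvent (Kernel.deterministic γ hγ ∘ₖ Q) x) :
    ∀ y : Y, φ.bind Q ≪ kernelResolvent (Q ∘ₖ Kernel.deterministic γ hγ) y := by
  intro y
  refine Measure.AbsolutelyContinuous.mk fun A hA h0 => ?_
  have hm : Measurable fun x => Q x A := Kernel.measurable_coe Q hA
  rw [kernelResolvent, Measure.sum_apply _ hA, ENNReal.tsum_eq_zero] at h0
  have hS : MeasurableSet {x | Q x A = 0} := hm (measurableSet_singleton 0)
  have key : ∀ᵐ x ∂(kernelResolvent (Kernel.deterministic γ hγ ∘ₖ Q) (γ y)), Q x A = 0 := by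
    rw [kernelResolvent, Measure.ae_sum_iff' hS]
    intro n
    refine Measure.ae_smul_measure ?_ _
    have h := h0 (n + 1)
    rw [Measure.smul_apply, smul_eq_mul, mul_eq_zero] at h
    have h2 := h.resolve_left (pow_ne_zero _ (by simp))
    rw [kernelIter_comp_succ, Kernel.comp_apply' _ _ _ hA,
      Kernel.comp_deterministic_eq_comap, Kernel.comap_apply, lintegral_eq_zero_iff hm] at h2
    exact h2
  rw [Measure.bind_apply hA Q.measurable.aemeasurable, lintegral_eq_zero_iff hm]
  exact (habs (γ y)).ae_le key
end

section
/- Let X and Y be measurable spaces, Q a Markov kernel from X to Y, γ : Y → X a measurable map, and R the deterministic kernel from Y to X given by R(·|y) = δ_{γ(y)}. Set K = Q⨟R and K' = R⨟Q, and let π be a probability measure on X invariant for K, i.e. πK = π. Then for every y ∈ Y and every integer n ≥ 1, sup over measurable A ⊆ Y of |(K')^n(A|y) − (πQ)(A)| is at most sup over measurable B ⊆ X of |K^{n−1}(B|γ(y)) − π(B)|. In particular, if there exist C < ∞ and ρ < 1 with sup_B |K^m(B|γ(y)) − π(B)| ≤ C ρ^m for all m ∈ ℕ, then sup_A |(K')^n(A|y)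 − (πQ)(A)| ≤ (max{C,1}/ρ) ρ^n for all n ≥ 1. -/
open ProbabilityTheory MeasureTheory

/-- Total variation distance between two measures, as the supremum over measurable sets of
the absolute difference of their (real-valued) masses. -/
noncomputable def tvDist {Z : Type*} [MeasurableSpace Z] (φ ψ : Measure Z) : ℝ :=
  sSup {r : ℝ | ∃ A : Set Z, MeasurableSet A ∧ r = |(φ A).toReal - (ψ A).toReal|}

theorem kernelIter_factor {X Y : Type*} [MeasurableSpace X] [MeasurableSpace Y]
    (Q : Kernel X Y) (R : Kernel Y X) (n : ℕ) :
    kernelIter (Q ∘ₖ R) (n + 1) = (Q ∘ₖ kernelIter (R ∘ₖ Q) n) ∘ₖ R := by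
  induction n with
  | zero => simp [kernelIter]
  | succ n ih =>
    rw [kernelIter, ih, kernelIter]
    simp only [Kernel.comp_assoc]

theorem kernelIter_markov {X : Type*} [MeasurableSpace X] (K : Kernel X X) [IsMarkovKernel K]
    (n : ℕ) : IsMarkovKernel (kernelIter K n) := by
  induction n with
  | zero => rw [kernelIter]; infer_instance
  | succ n ih => rw [kernelIter]; infer_instance

theorem le_tvDist {Z : Type*} [MeasurableSpace Z] (φ ψ : Measure Z) [IsProbabilityMeasure φ]
    [IsProbabilityMeasure ψ] {A : Set Z} (hA : MeasurableSet A) :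
    |φ.real A - ψ.real A| ≤ tvDist φ ψ := by
  refine le_csSup ⟨1, ?_⟩ ⟨A, hA, rfl⟩
  rintro r ⟨B, -, rfl⟩
  change |φ.real B - ψ.real B| ≤ 1
  have h1 : φ.real B ≤ 1 := measureReal_le_one
  have h2 : ψ.real B ≤ 1 := measureReal_le_one
  have h3 : 0 ≤ φ.real B := measureReal_nonneg
  have h4 : 0 ≤ ψ.real B := measureReal_nonneg
  rw [abs_le]; constructor <;> linarith

theorem abs_integral_sub_le_tvDist {Z : Type*} [MeasurableSpace Z] (φ ψ : Measure Z)
    [IsProbabilityMeasure φ] [IsProbabilityMeasure ψ] {f : Z → ℝ} (hf : Measurable f)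
    (h0 : ∀ z, 0 ≤ f z) (h1 : ∀ z, f z ≤ 1) :
    |∫ z, f z ∂φ - ∫ z, f z ∂ψ| ≤ tvDist φ ψ := by
  have key : ∀ (μ : Measure Z) [IsProbabilityMeasure μ],
      ∫ z, f z ∂μ = ∫ t in Set.Ioc (0 : ℝ) 1, μ.real {a | t ≤ f a} := by
    intro μ _
    refine Integrable.integral_eq_integral_Ioc_meas_le ?_ (.of_forall h0) (.of_forall h1)
    refine Integrable.of_bound hf.aestronglyMeasurable 1 (.of_forall fun z => ?_)
    rw [Real.norm_eq_abs, abs_of_nonneg (h0 z)]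
    exact h1 z
  have hint : ∀ (μ : Measure Z) [IsProbabilityMeasure μ],
      IntegrableOn (fun t : ℝ => μ.real {a | t ≤ f a}) (Set.Ioc 0 1) := by
    intro μ _
    have : Antitone (fun t : ℝ => μ.real {a | t ≤ f a}) := fun s t hst =>
      measureReal_mono (fun a (ha : t ≤ f a) => hst.trans ha)
    exact (intervalIntegrable_iff_integrableOn_Ioc_of_le zero_le_one).1 this.intervalIntegrable
  rw [key φ, key ψ, ← integral_sub (hint φ) (hint ψ)]
  have := norm_setIntegral_le_of_norm_le_const (μ := volume) (s := Set.Ioc (0 : ℝ) 1)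
    (f := fun t : ℝ => φ.real {a | t ≤ f a} - ψ.real {a | t ≤ f a}) (C := tvDist φ ψ)
    (by simp) (fun t _ => le_tvDist φ ψ (measurableSet_le measurable_const hf))
  simpa using this

/-- Data processing inequality for total variation. -/
theorem tvDist_bind_le {X Y : Type*} [MeasurableSpace X] [MeasurableSpace Y]
    (φ ψ : Measure X) [IsProbabilityMeasure φ] [IsProbabilityMeasure ψ]
    (Q : Kernel X Y) [IsMarkovKernel Q] :
    tvDist (φ.bind Q) (ψ.bind Q) ≤ tvDist φ ψ := by
  refine csSup_le ⟨_, Set.univ, MeasurableSet.univ, rfl⟩ ?_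
  rintro r ⟨A, hA, rfl⟩
  have key : ∀ (μ : Measure X), (μ.bind Q A).toReal = ∫ x, (Q x).real A ∂μ := by
    intro μ
    rw [Measure.bind_apply hA Q.aemeasurable]
    refine (integral_toReal (Q.measurable_coe hA).aemeasurable (.of_forall fun x => ?_)).symm
    exact measure_lt_top _ _
  rw [key, key]
  exact abs_integral_sub_le_tvDist φ ψ (Q.measurable_coe hA).ennreal_toReal
    (fun _ => measureReal_nonneg) (fun _ => measureReal_le_one)

/-- **Inheriting geometric ergodicity (quantitative core).**
Let `Q : X → Y` be a Markov kernel, `γ : Y → X` measurable, `R = δ_{γ(·)}` the deterministic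
kernel, `K = Q⨟R = R ∘ₖ Q` and `K' = R⨟Q = Q ∘ₖ R`, and let `π` be invariant for `K`.
Then for every `y` and every `n ≥ 1`,
`‖(K')^n(·|y) − πQ‖_TV ≤ ‖K^{n-1}(·|γ(y)) − π‖_TV`; in particular, if
`‖K^m(·|γ(y)) − π‖_TV ≤ C ρ^m` for all `m` with `0 < ρ < 1`, then
`‖(K')^n(·|y) − πQ‖_TV ≤ (max C 1 / ρ) * ρ^n` for all `n ≥ 1`. -/
theorem augmented_kernel_geometric_ergodicity {X Y : Type*}
    [MeasurableSpace X] [MeasurableSpace Y]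
    (Q : Kernel X Y) [IsMarkovKernel Q] (γ : Y → X) (hγ : Measurable γ)
    (π : Measure X) [IsProbabilityMeasure π]
    (hinv : Kernel.Invariant (Kernel.deterministic γ hγ ∘ₖ Q) π) :
    (∀ (y : Y) (n : ℕ), 1 ≤ n →
        tvDist (kernelIter (Q ∘ₖ Kernel.deterministic γ hγ) n y) (π.bind Q) ≤
          tvDist (kernelIter (Kernel.deterministic γ hγ ∘ₖ Q) (n - 1) (γ y)) π) ∧
      (∀ (y : Y) (C ρ : ℝ), 0 < ρ → ρ < 1 →
        (∀ m : ℕ,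
          tvDist (kernelIter (Kernel.deterministic γ hγ ∘ₖ Q) m (γ y)) π ≤ C * ρ ^ m) →
        ∀ n : ℕ, 1 ≤ n →
          tvDist (kernelIter (Q ∘ₖ Kernel.deterministic γ hγ) n y) (π.bind Q) ≤
            max C 1 / ρ * ρ ^ n) := by
  have main : ∀ (y : Y) (n : ℕ), 1 ≤ n →
        tvDist (kernelIter (Q ∘ₖ Kernel.deterministic γ hγ) n y) (π.bind Q) ≤
          tvDist (kernelIter (Kernel.deterministic γ hγ ∘ₖ Q) (n - 1) (γ y)) π := by
    intro y n hn
    obtain ⟨m, rfl⟩ := Nat.exists_eq_add_of_le' hn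
    have := kernelIter_markov (Kernel.deterministic γ hγ ∘ₖ Q) m
    rw [kernelIter_factor, Nat.add_sub_cancel, Kernel.comp_deterministic_eq_comap,
      Kernel.comap_apply, Kernel.comp_apply]
    exact tvDist_bind_le _ _ Q
  refine ⟨main, fun y C ρ h0 _ hC n hn => ?_⟩
  refine (main y n hn).trans ((hC (n - 1)).trans ?_)
  obtain ⟨m, rfl⟩ := Nat.exists_eq_add_of_le' hn
  have h : max C 1 / ρ * ρ ^ (m + 1) = max C 1 * ρ ^ m := by
    field_simp
    ring
  rw [h, Nat.add_sub_cancel]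
  exact mul_le_mul_of_nonneg_right (le_max_left _ _) (by positivity)
end

section
/- Let X be a measurable space, q a Markov kernel on X, and α : X × X → [0,1] a jointly measurable function; define a(x) = ∫ α(x°, x) q(dx°|x) and the kernel K(A|x) = ∫_A α(x°, x) q(dx°|x) + (1 − a(x)) δ_x(A), and let π be a probability measure on X with πK = π. Let s : X → ℝ be measurable with ∫ s² dπ < ∞, and let w : X × X → ℝ be measurable with |w(x, x°)| ≤ α(x°, x) · (|s(x)| + |s(x°)|) for all x, x°. Then ∫∫ w(x, x°)² q(dx°|x) π(dx) ≤ 2 ∫ s² dπ + 2 ∫∫ α(x°, x) s(x°)² q(dx°|x) π(dx) ≤ 4 ∫ s² dπ; in particular the left-hand side is finite. -/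
open ProbabilityTheory MeasureTheory ENNReal

/-- **Weight moments bound for the DMH estimator.**
Let `q` be a Markov kernel on `X` and `α : X × X → [0,1]` jointly measurable, and let `π`
be invariant for the Metropolis–Hastings-type kernel
`K(A|x) = ∫_A α(x°,x) q(dx°|x) + (1 − a(x)) δ_x(A)`.  Let `s : X → ℝ` be measurable with
`∫ s² dπ < ∞`, and let `w : X × X → ℝ` be measurable with
`|w(x,x°)| ≤ α(x°,x)(|s x| + |s x°|)`.  Then
`∫∫ w² dq dπ ≤ 2 ∫ s² dπ + 2 ∫∫ α(x°,x) s(x°)² dq dπ ≤ 4 ∫ s² dπ`; in particular the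
left-hand side is finite. -/
theorem DMH_weight_second_moment {X : Type*} [MeasurableSpace X]
    (q : Kernel X X) [IsMarkovKernel q]
    (α : X → X → ℝ) (hα_meas : Measurable fun p : X × X => α p.1 p.2)
    (hα0 : ∀ x' x : X, 0 ≤ α x' x) (hα1 : ∀ x' x : X, α x' x ≤ 1)
    (π : Measure X) [IsProbabilityMeasure π]
    (hinv : ∀ A : Set X, MeasurableSet A →
      ∫⁻ x, (∫⁻ x' in A, ENNReal.ofReal (α x' x) ∂(q x)) +
          (1 - ∫⁻ x', ENNReal.ofReal (α x' x) ∂(q x)) *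
            A.indicator (fun _ => (1 : ℝ≥0∞)) x ∂π = π A)
    (s : X → ℝ) (hs_meas : Measurable s)
    (hs2 : ∫⁻ x, ENNReal.ofReal (s x ^ 2) ∂π < ⊤)
    (w : X → X → ℝ) (hw_meas : Measurable fun p : X × X => w p.1 p.2)
    (hw_le : ∀ x x' : X, |w x x'| ≤ α x' x * (|s x| + |s x'|)) :
    (∫⁻ x, ∫⁻ x', ENNReal.ofReal (w x x' ^ 2) ∂(q x) ∂π ≤
        2 * ∫⁻ x, ENNReal.ofReal (s x ^ 2) ∂π +
          2 * ∫⁻ x, ∫⁻ x', ENNReal.ofReal (α x' x * s x' ^ 2) ∂(q x) ∂π) ∧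
      (2 * ∫⁻ x, ENNReal.ofReal (s x ^ 2) ∂π +
          2 * ∫⁻ x, ∫⁻ x', ENNReal.ofReal (α x' x * s x' ^ 2) ∂(q x) ∂π ≤
        4 * ∫⁻ x, ENNReal.ofReal (s x ^ 2) ∂π) ∧
      ∫⁻ x, ∫⁻ x', ENNReal.ofReal (w x x' ^ 2) ∂(q x) ∂π < ⊤ := by
  have hf : Measurable (Function.uncurry fun x x' : X => ENNReal.ofReal (α x' x)) :=
    (hα_meas.comp measurable_swap).ennreal_ofReal
  let κ : Kernel X X := Kernel.withDensity q (fun x x' => ENNReal.ofReal (α x' x))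
  have hg : Measurable fun x => ENNReal.ofReal (s x ^ 2) := (hs_meas.pow_const 2).ennreal_ofReal
  have hle : π.bind κ ≤ π := by
    refine Measure.le_iff.2 fun A hA => ?_
    rw [Measure.bind_apply hA κ.measurable.aemeasurable, ← hinv A hA]
    refine lintegral_mono fun x => ?_
    have : κ x A = ∫⁻ x' in A, ENNReal.ofReal (α x' x) ∂(q x) :=
      Kernel.withDensity_apply' q hf x A
    rw [this]
    exact le_self_add
  have hacc : ∫⁻ x, ∫⁻ x', ENNReal.ofReal (α x' x * s x' ^ 2) ∂(q x) ∂π ≤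
      ∫⁻ x, ENNReal.ofReal (s x ^ 2) ∂π := by
    refine le_trans (le_of_eq ?_) (lintegral_mono' hle le_rfl)
    rw [Measure.lintegral_bind κ.measurable.aemeasurable hg.aemeasurable]
    refine lintegral_congr fun x => ?_
    have := Kernel.lintegral_withDensity q hf x hg
    refine Eq.trans ?_ this.symm
    refine lintegral_congr fun x' => ?_
    exact ENNReal.ofReal_mul (hα0 _ _)
  have h1 : ∫⁻ x, ∫⁻ x', ENNReal.ofReal (w x x' ^ 2) ∂(q x) ∂π ≤
        2 * ∫⁻ x, ENNReal.ofReal (s x ^ 2) ∂π +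
          2 * ∫⁻ x, ∫⁻ x', ENNReal.ofReal (α x' x * s x' ^ 2) ∂(q x) ∂π := by
    rw [← lintegral_const_mul' _ _ (by simp), ← lintegral_const_mul' _ _ (by simp),
      ← lintegral_add_left (hg.const_mul 2)]
    refine lintegral_mono fun x => ?_
    have hpt : ∀ x', ENNReal.ofReal (w x x' ^ 2) ≤
        2 * ENNReal.ofReal (s x ^ 2) + 2 * ENNReal.ofReal (α x' x * s x' ^ 2) := by
      intro x'
      have h0 := hα0 x' x
      have h1 := hα1 x' x
      have hr : w x x' ^ 2 ≤ 2 * s x ^ 2 + 2 * (α x' x * s x' ^ 2) := by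
        have ha : w x x' ^ 2 ≤ (α x' x * (|s x| + |s x'|)) ^ 2 := by
          rw [← sq_abs]
          exact pow_le_pow_left₀ (abs_nonneg _) (hw_le x x') 2
        have hb : (|s x| + |s x'|) ^ 2 ≤ 2 * s x ^ 2 + 2 * s x' ^ 2 := by
          nlinarith [sq_nonneg (|s x| - |s x'|), sq_abs (s x), sq_abs (s x')]
        have hc : α x' x ^ 2 ≤ α x' x := by nlinarith
        have hd : α x' x ^ 2 * (|s x| + |s x'|) ^ 2 ≤
            α x' x * (2 * s x ^ 2 + 2 * s x' ^ 2) :=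
          mul_le_mul hc hb (sq_nonneg _) h0
        have he : α x' x * s x ^ 2 ≤ s x ^ 2 :=
          mul_le_of_le_one_left (sq_nonneg _) h1
        rw [mul_pow] at ha
        linarith
      have h2 : (2 : ℝ≥0∞) = ENNReal.ofReal 2 := by simp
      rw [h2, ← ENNReal.ofReal_mul (by norm_num), ← ENNReal.ofReal_mul (by norm_num),
        ← ENNReal.ofReal_add (by positivity) (by positivity)]
      exact ENNReal.ofReal_le_ofReal hr
    refine (lintegral_mono hpt).trans ?_
    rw [lintegral_add_left measurable_const, lintegral_const, measure_univ, mul_one,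
      lintegral_const_mul' _ _ (by simp)]
  have h2 : 2 * ∫⁻ x, ENNReal.ofReal (s x ^ 2) ∂π +
          2 * ∫⁻ x, ∫⁻ x', ENNReal.ofReal (α x' x * s x' ^ 2) ∂(q x) ∂π ≤
        4 * ∫⁻ x, ENNReal.ofReal (s x ^ 2) ∂π := by
    calc _ ≤ 2 * ∫⁻ x, ENNReal.ofReal (s x ^ 2) ∂π +
          2 * ∫⁻ x, ENNReal.ofReal (s x ^ 2) ∂π := by gcongr
      _ = _ := by ring
  exact ⟨h1, h2, (h1.trans h2).trans_lt (ENNReal.mul_lt_top (by simp) hs2)⟩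
end

section
/- Let (Ω, F, μ) be a probability space, T : Ω → Ω a measure-preserving transformation that is ergodic with respect to μ, and let h and (h_m)_{m∈ℕ} be measurable real-valued functions on Ω such that h_m → h μ-almost everywhere and sup_{m∈ℕ} |h_m| is μ-integrable. Then for μ-almost every ω, (1/N) Σ_{n=0}^{N−1} h_{N−n}(T^n ω) → ∫ h dμ as N → ∞, and the convergence also holds in L¹(μ). -/
open MeasureTheory Filter Topology

theorem integral_comp_pres {Ω : Type*} [MeasurableSpace Ω] (μ : Measure Ω)
    (T : Ω → Ω) (hT : MeasurePreserving T μ μ) (f : Ω → ℝ) (hf : Measurable f) :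
    ∫ ω, f (T ω) ∂μ = ∫ ω, f ω ∂μ := by
  have := integral_map (μ := μ) (f := f) hT.aemeasurable hf.aestronglyMeasurable
  rw [hT.map_eq] at this
  exact this.symm

/-- running maxima of the Birkhoff sums -/
noncomputable def makerMax {Ω : Type*} (T : Ω → Ω) (g : Ω → ℝ) : ℕ → Ω → ℝ
  | 0 => g
  | n + 1 => fun ω => g ω + max 0 (makerMax T g n (T ω))

theorem makerMax_mono {Ω : Type*} (T : Ω → Ω) (g : Ω → ℝ) (n : ℕ) :
    ∀ ω, makerMax T g n ω ≤ makerMax T g (n + 1) ω := by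
  induction n with
  | zero => intro ω; simp [makerMax]
  | succ n ih =>
    intro ω
    simp only [makerMax]
    gcongr
    exact ih (T ω)

theorem sum_le_makerMax {Ω : Type*} (T : Ω → Ω) (g : Ω → ℝ) (n : ℕ) :
    ∀ ω, ∑ i ∈ Finset.range (n + 1), g (T^[i] ω) ≤ makerMax T g n ω := by
  induction n with
  | zero => intro ω; simp [makerMax]
  | succ n ih =>
    intro ω
    rw [Finset.sum_range_succ']
    simp only [Function.iterate_succ_apply, Function.iterate_zero, id]
    have := ih (T ω)
    simp only [makerMax]
    linarith [le_max_right 0 (makerMax T g n (T ω))]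

theorem bdd_of_integral_neg {Ω : Type*} [MeasurableSpace Ω] (μ : Measure Ω)
    [IsProbabilityMeasure μ] (T : Ω → Ω) (hT : Ergodic T μ) (g : Ω → ℝ)
    (hg : Measurable g) (hgi : Integrable g μ) (hneg : ∫ x, g x ∂μ < 0) :
    ∀ᵐ ω ∂μ, ∃ C : ℝ, 0 ≤ C ∧ ∀ n, ∑ i ∈ Finset.range n, g (T^[i] ω) ≤ C := by
  have hmp := hT.toMeasurePreserving
  have hm : ∀ n, Measurable (makerMax T g n) := by
    intro n
    induction n with
    | zero => exact hg
    | succ n ih => exact hg.add (measurable_const.max (ih.comp hmp.measurable))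
  have hi : ∀ n, Integrable (makerMax T g n) μ := by
    intro n
    induction n with
    | zero => exact hgi
    | succ n ih =>
      exact hgi.add ((integrable_zero _ _ _).sup (hmp.integrable_comp_of_integrable ih))
  set A : Set Ω := {ω | BddAbove (Set.range fun n => makerMax T g n ω)} with hA
  have hAm : MeasurableSet A := measurableSet_bddAbove_range hm
  have hmono : ∀ ω, Monotone fun n => makerMax T g n ω :=
    fun ω => monotone_nat_of_le_succ fun n => makerMax_mono T g n ω
  have hinv : T ⁻¹' A = A := by
    ext ω
    simp only [hA, Set.mem_preimage, Set.mem_ofPred_eq]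
    constructor
    · rintro ⟨C, hC⟩
      refine ⟨g ω + max 0 C, ?_⟩
      rintro _ ⟨n, rfl⟩
      refine (makerMax_mono T g n ω).trans ?_
      simp only [makerMax]
      gcongr
      exact hC ⟨n, rfl⟩
    · rintro ⟨C, hC⟩
      refine ⟨C - g ω, ?_⟩
      rintro _ ⟨n, rfl⟩
      have := hC ⟨n + 1, rfl⟩
      simp only [makerMax] at this ⊢
      linarith [le_max_right 0 (makerMax T g n (T ω))]
  rcases hT.toPreErgodic.measure_self_or_compl_eq_zero hAm hinv with h0 | h0
  · exfalso
    have hnot : ∀ᵐ ω ∂μ, ω ∉ A := measure_eq_zero_iff_ae_notMem.1 h0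
    have hlim : Tendsto (fun n => ∫ ω, (g ω - min 0 (makerMax T g n (T ω))) ∂μ) atTop
        (𝓝 (∫ ω, g ω ∂μ)) := by
      refine tendsto_integral_of_dominated_convergence (fun ω => |g ω| + |g (T ω)|) ?_ ?_ ?_ ?_
      · intro n
        exact (hg.sub (measurable_const.min ((hm n).comp hmp.measurable))).aestronglyMeasurable
      · exact hgi.abs.add (hmp.integrable_comp_of_integrable hgi.abs)
      · intro n
        refine ae_of_all _ fun ω => ?_
        have h1 : g (T ω) ≤ makerMax T g n (T ω) := hmono (T ω) (Nat.zero_le n)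
        have h2 : |min 0 (makerMax T g n (T ω))| ≤ |g (T ω)| := by
          rw [abs_of_nonpos (min_le_left _ _)]
          rcases min_choice 0 (makerMax T g n (T ω)) with h | h <;> rw [h]
          · simp
          · linarith [neg_abs_le (g (T ω))]
        rw [Real.norm_eq_abs]
        exact (abs_sub _ _).trans (by linarith)
      · filter_upwards [hnot] with ω hω
        have hω' : T ω ∉ A := fun hh => hω (hinv ▸ hh)
        have ht : Tendsto (fun n => makerMax T g n (T ω)) atTop atTop :=
          tendsto_atTop_atTop_of_monotone (hmono _) (by
            simp only [hA, Set.mem_ofPred_eq, not_bddAbove_iff] at hω'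
            intro b
            obtain ⟨_, ⟨n, rfl⟩, hn⟩ := hω' b
            exact ⟨n, hn.le⟩)
        refine tendsto_const_nhds.congr' ?_
        filter_upwards [ht.eventually_ge_atTop 0] with n hn
        rw [min_eq_left hn, sub_zero]
    have hge : 0 ≤ ∫ ω, g ω ∂μ := by
      refine ge_of_tendsto' hlim fun n => ?_
      have e : ∀ ω, g ω - min 0 (makerMax T g n (T ω))
          = makerMax T g (n + 1) ω - makerMax T g n (T ω) := by
        intro ω
        simp only [makerMax]
        linarith [min_add_max 0 (makerMax T g n (T ω))]
      simp_rw [e]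
      have hiT : Integrable (fun ω => makerMax T g n (T ω)) μ :=
        hmp.integrable_comp_of_integrable (hi n)
      rw [integral_sub (hi _) hiT, integral_comp_pres μ T hmp _ (hm n)]
      linarith [integral_mono (hi n) (hi (n+1)) (makerMax_mono T g n)]
    linarith
  · have : ∀ᵐ ω ∂μ, ω ∈ A := h0
    filter_upwards [this] with ω hω
    obtain ⟨C, hC⟩ := hω
    refine ⟨max 0 C, le_max_left _ _, fun n => ?_⟩
    cases n with
    | zero => simp
    | succ n => exact (sum_le_makerMax T g n ω).trans ((hC ⟨n, rfl⟩).trans (le_max_right _ _))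

theorem birkhoff_upper {Ω : Type*} [MeasurableSpace Ω] (μ : Measure Ω)
    [IsProbabilityMeasure μ] (T : Ω → Ω) (hT : Ergodic T μ) (f : Ω → ℝ)
    (hf : Measurable f) (hfi : Integrable f μ) :
    ∀ᵐ ω ∂μ, ∀ ε > 0, ∀ᶠ N : ℕ in atTop,
      (N : ℝ)⁻¹ * ∑ n ∈ Finset.range N, f (T^[n] ω) < ∫ x, f x ∂μ + ε := by
  have key : ∀ j : ℕ, ∀ᵐ ω ∂μ, ∃ C : ℝ, 0 ≤ C ∧ ∀ n, ∑ i ∈ Finset.range n,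
      (f (T^[i] ω) - (∫ x, f x ∂μ + 1 / ((j : ℝ) + 1))) ≤ C := by
    intro j
    refine bdd_of_integral_neg μ T hT (fun ω => f ω - (∫ x, f x ∂μ + 1 / ((j : ℝ) + 1)))
      (hf.sub_const _) (hfi.sub (integrable_const _)) ?_
    rw [integral_sub hfi (integrable_const _)]
    have : (0:ℝ) < 1 / ((j : ℝ) + 1) := by positivity
    simp only [integral_const, probReal_univ, one_smul]
    linarith
  filter_upwards [ae_all_iff.2 key] with ω hω ε hε
  obtain ⟨j, hj⟩ := exists_nat_one_div_lt (half_pos hε)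
  obtain ⟨C, hC0, hC⟩ := hω j
  have ht : Tendsto (fun N : ℕ => (N : ℝ)⁻¹ * C) atTop (𝓝 0) := by
    simpa using (tendsto_inv_atTop_nhds_zero_nat (𝕜 := ℝ)).mul_const C
  filter_upwards [ht.eventually_lt_const (half_pos hε), eventually_gt_atTop 0] with N hN hN0
  have hN' : (0:ℝ) < N := by exact_mod_cast hN0
  have := hC N
  rw [Finset.sum_sub_distrib, Finset.sum_const, Finset.card_range, nsmul_eq_mul] at this
  have h2 := mul_le_mul_of_nonneg_left this (inv_nonneg.2 hN'.le)
  rw [mul_sub, inv_mul_cancel_left₀ hN'.ne'] at h2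
  linarith

theorem birkhoff_pointwise {Ω : Type*} [MeasurableSpace Ω] (μ : Measure Ω)
    [IsProbabilityMeasure μ] (T : Ω → Ω) (hT : Ergodic T μ) (f : Ω → ℝ)
    (hf : Measurable f) (hfi : Integrable f μ) :
    ∀ᵐ ω ∂μ, Tendsto (fun N : ℕ => (N : ℝ)⁻¹ * ∑ n ∈ Finset.range N, f (T^[n] ω))
      atTop (𝓝 (∫ x, f x ∂μ)) := by
  filter_upwards [birkhoff_upper μ T hT f hf hfi,
    birkhoff_upper μ T hT (fun x => - f x) hf.neg hfi.neg] with ω h1 h2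
  rw [Metric.tendsto_nhds]
  intro ε hε
  filter_upwards [h1 ε hε, h2 ε hε] with N a b
  rw [Finset.sum_neg_distrib, integral_neg] at b
  rw [Real.dist_eq, abs_lt]
  constructor <;> linarith

/-- Birkhoff averages have the same integral. -/
theorem integral_birkhoff {Ω : Type*} [MeasurableSpace Ω] (μ : Measure Ω)
    (T : Ω → Ω) (hT : MeasurePreserving T μ μ) (f : Ω → ℝ)
    (hf : Measurable f) (hfi : Integrable f μ) (N : ℕ) (hN : 0 < N) :
    ∫ ω, (N : ℝ)⁻¹ * ∑ n ∈ Finset.range N, f (T^[n] ω) ∂μ = ∫ ω, f ω ∂μ := by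
  have hN' : (N : ℝ) ≠ 0 := by exact_mod_cast hN.ne'
  rw [integral_const_mul, integral_finset_sum]
  · simp_rw [fun n => integral_comp_pres μ (T^[n]) (hT.iterate n) f hf]
    rw [Finset.sum_const, Finset.card_range, nsmul_eq_mul, inv_mul_cancel_left₀ hN']
  · intro n _
    exact (hT.iterate n).integrable_comp_of_integrable hfi

/-- generalized dominated convergence towards zero -/
theorem tendsto_zero_of_dominated {Ω : Type*} [MeasurableSpace Ω] (μ : Measure Ω)
    [IsProbabilityMeasure μ] (X Y : ℕ → Ω → ℝ) (C : ℝ)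
    (hX : ∀ n, Measurable (X n)) (hY : ∀ n, Integrable (Y n) μ)
    (hX0 : ∀ n ω, 0 ≤ X n ω) (hXY : ∀ n, ∀ᵐ ω ∂μ, X n ω ≤ Y n ω)
    (hXl : ∀ᵐ ω ∂μ, Tendsto (fun n => X n ω) atTop (𝓝 0))
    (hYl : ∀ᵐ ω ∂μ, Tendsto (fun n => Y n ω) atTop (𝓝 C))
    (hYC : ∀ᶠ n in atTop, ∫ ω, Y n ω ∂μ = C) (hC : 0 ≤ C) :
    Tendsto (fun n => ∫ ω, X n ω ∂μ) atTop (𝓝 0) := by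
  have hXi : ∀ n, Integrable (X n) μ := fun n =>
    (hY n).mono' (hX n).aestronglyMeasurable ((hXY n).mono fun ω h => by
      rwa [Real.norm_eq_abs, abs_of_nonneg (hX0 n ω)])
  have hm1 : ∀ n, Integrable (fun ω => min (X n ω) C) μ := fun n =>
    (hXi n).inf (integrable_const C)
  have hm2 : ∀ n, Integrable (fun ω => max (C - Y n ω) 0) μ := fun n =>
    ((integrable_const C).sub (hY n)).sup (integrable_const 0)
  have h1 : Tendsto (fun n => ∫ ω, min (X n ω) C ∂μ) atTop (𝓝 (∫ _ω, (0:ℝ) ∂μ)) := by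
    refine tendsto_integral_of_dominated_convergence (fun _ => C) (fun n => (hm1 n).1)
      (integrable_const C) (fun n => ae_of_all _ fun ω => ?_) ?_
    · rw [Real.norm_eq_abs, abs_of_nonneg (le_min (hX0 n ω) hC)]
      exact min_le_right _ _
    · filter_upwards [hXl] with ω h
      simpa [min_eq_left hC] using h.min (tendsto_const_nhds (x := C))
  have h2 : Tendsto (fun n => ∫ ω, max (C - Y n ω) 0 ∂μ) atTop (𝓝 (∫ _ω, (0:ℝ) ∂μ)) := by
    refine tendsto_integral_of_dominated_convergence (fun _ => C) (fun n => (hm2 n).1)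
      (integrable_const C) (fun n => ?_) ?_
    · filter_upwards [hXY n] with ω h
      rw [Real.norm_eq_abs, abs_of_nonneg (le_max_right _ _)]
      exact max_le (by linarith [hX0 n ω]) hC
    · filter_upwards [hYl] with ω h
      simpa using (h.const_sub C).max (tendsto_const_nhds (x := (0:ℝ)))
  have h3 := h1.add h2
  simp only [integral_zero, add_zero] at h3
  refine squeeze_zero' (Eventually.of_forall fun n => integral_nonneg (hX0 n)) ?_ h3
  filter_upwards [hYC] with n hn
  have hle : ∫ ω, X n ω ∂μ ≤
      ∫ ω, ((min (X n ω) C + max (C - Y n ω) 0) + (Y n ω - C)) ∂μ := by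
    refine integral_mono_ae (hXi n) (((hm1 n).add (hm2 n)).add
      ((hY n).sub (integrable_const C))) ?_
    filter_upwards [hXY n] with ω h
    rcases min_choice (X n ω) C with e | e <;> rw [e]
    · linarith [le_max_left (C - Y n ω) 0]
    · linarith [le_max_right (C - Y n ω) 0]
  have e2 : ∫ ω, ((min (X n ω) C + max (C - Y n ω) 0) + (Y n ω - C)) ∂μ
      = ∫ ω, (min (X n ω) C + max (C - Y n ω) 0) ∂μ + ∫ ω, (Y n ω - C) ∂μ :=
    integral_add ((hm1 n).add (hm2 n)) ((hY n).sub (integrable_const C))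
  rw [e2, integral_add (hm1 n) (hm2 n), integral_sub (hY n) (integrable_const C), hn] at hle
  simpa using hle

theorem shifted_average {a : ℕ → ℝ} {L : ℝ} (k : ℕ)
    (ha : Tendsto (fun N : ℕ => (N : ℝ)⁻¹ * a N) atTop (𝓝 L)) :
    Tendsto (fun N : ℕ => (N : ℝ)⁻¹ * a (N - k)) atTop (𝓝 L) := by
  rw [← tendsto_add_atTop_iff_nat k]
  simp only [Nat.add_sub_cancel]
  have h1 : Tendsto (fun N : ℕ => (N : ℝ) / ((N : ℝ) + k)) atTop (𝓝 1) :=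
    tendsto_natCast_div_add_atTop (k : ℝ)
  have h2 := h1.mul ha
  rw [one_mul] at h2
  refine h2.congr' ?_
  filter_upwards [eventually_gt_atTop 0] with N hN
  have hN' : (0:ℝ) < N := by exact_mod_cast hN
  push_cast
  field_simp

/-- **Maker's ergodic theorem for finite-horizon (triangular) averages.**
Let `T` be an ergodic measure-preserving transformation of a probability space `(Ω, μ)`,
and let `h, (h_m)_{m ∈ ℕ}` be measurable with `h_m → h` a.e. and `sup_m |h_m|` integrable
(and a.e. finite).  Then `(1/N) ∑_{n=0}^{N-1} h_{N-n}(T^n ω) → ∫ h dμ` for a.e. `ω`, with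
convergence also in `L¹(μ)`. -/
theorem maker_ergodic_theorem {Ω : Type*} [MeasurableSpace Ω] (μ : Measure Ω)
    [IsProbabilityMeasure μ] (T : Ω → Ω) (hT : Ergodic T μ)
    (h : Ω → ℝ) (H : ℕ → Ω → ℝ)
    (h_meas : Measurable h) (H_meas : ∀ m, Measurable (H m))
    (h_lim : ∀ᵐ ω ∂μ, Tendsto (fun m => H m ω) atTop (𝓝 (h ω)))
    (h_bdd : ∀ᵐ ω ∂μ, BddAbove (Set.range fun m => |H m ω|))
    (h_int : Integrable (fun ω => ⨆ m, |H m ω|) μ) :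
    (∀ᵐ ω ∂μ,
      Tendsto (fun N : ℕ => (N : ℝ)⁻¹ * ∑ n ∈ Finset.range N, H (N - n) (T^[n] ω))
        atTop (𝓝 (∫ x, h x ∂μ))) ∧
    Tendsto
      (fun N : ℕ => ∫ ω,
        |(N : ℝ)⁻¹ * ∑ n ∈ Finset.range N, H (N - n) (T^[n] ω) - ∫ x, h x ∂μ| ∂μ)
      atTop (𝓝 0) := by
  have hmp := hT.toMeasurePreserving
  set F : Ω → ℝ := fun ω => ⨆ m, |H m ω| with hF
  have F_meas : Measurable F := Measurable.iSup fun m => (H_meas m).abs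
  set G : ℕ → Ω → ℝ := fun k ω => ⨆ m, |H (m + k) ω - h ω| with hG
  have G_meas : ∀ k, Measurable (G k) := fun k =>
    Measurable.iSup fun m => ((H_meas (m + k)).sub h_meas).abs
  have HF : ∀ᵐ ω ∂μ, ∀ m, |H m ω| ≤ F ω := by
    filter_upwards [h_bdd] with ω hb m
    exact le_ciSup hb m
  have hhF : ∀ᵐ ω ∂μ, |h ω| ≤ F ω := by
    filter_upwards [HF, h_lim] with ω hb hl
    exact le_of_tendsto' hl.abs hb
  have diffF : ∀ᵐ ω ∂μ, ∀ m, |H m ω - h ω| ≤ 2 * F ω := by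
    filter_upwards [HF, hhF] with ω h1 h2 m
    linarith [abs_sub (H m ω) (h ω), h1 m]
  have G_ge : ∀ᵐ ω ∂μ, ∀ k m, |H (m + k) ω - h ω| ≤ G k ω := by
    filter_upwards [diffF] with ω hd k m
    exact le_ciSup (f := fun m => |H (m + k) ω - h ω|)
      ⟨2 * F ω, by rintro _ ⟨m, rfl⟩; exact hd _⟩ m
  have G_nonneg : ∀ k ω, 0 ≤ G k ω := fun k ω => Real.iSup_nonneg fun m => abs_nonneg _
  have G_le : ∀ k, ∀ᵐ ω ∂μ, ‖G k ω‖ ≤ 2 * F ω := by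
    intro k
    filter_upwards [diffF] with ω hd
    rw [Real.norm_eq_abs, abs_of_nonneg (G_nonneg k ω)]
    exact ciSup_le fun m => hd _
  have G_int : ∀ k, Integrable (G k) μ := fun k =>
    (h_int.const_mul 2).mono' (G_meas k).aestronglyMeasurable (G_le k)
  have hh_int : Integrable h μ := h_int.mono' h_meas.aestronglyMeasurable hhF
  have G_lim : Tendsto (fun k => ∫ ω, G k ω ∂μ) atTop (𝓝 (∫ _ω, (0:ℝ) ∂μ)) := by
    refine tendsto_integral_of_dominated_convergence (fun ω => 2 * F ω)
      (fun k => (G_meas k).aestronglyMeasurable) (h_int.const_mul 2) G_le ?_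
    filter_upwards [h_lim] with ω hl
    rw [Metric.tendsto_atTop] at hl ⊢
    intro ε hε
    obtain ⟨k₀, hk₀⟩ := hl (ε / 2) (half_pos hε)
    refine ⟨k₀, fun k hk => ?_⟩
    rw [Real.dist_eq, sub_zero, abs_of_nonneg (G_nonneg k ω)]
    refine lt_of_le_of_lt (ciSup_le fun m => ?_) (half_lt_self hε)
    have := hk₀ (m + k) (by omega)
    rw [Real.dist_eq] at this
    exact this.le
  rw [integral_zero] at G_lim
  -- orbit versions of a.e. statements
  have orbit : ∀ {p : Ω → Prop}, (∀ᵐ ω ∂μ, p ω) → ∀ᵐ ω ∂μ, ∀ n, p (T^[n] ω) := by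
    intro p hp
    rw [ae_all_iff]
    intro n
    exact (hmp.iterate n).quasiMeasurePreserving.ae hp
  have main : ∀ᵐ ω ∂μ,
      Tendsto (fun N : ℕ => (N : ℝ)⁻¹ * ∑ n ∈ Finset.range N, H (N - n) (T^[n] ω))
        atTop (𝓝 (∫ x, h x ∂μ)) := by
    filter_upwards [orbit G_ge, birkhoff_pointwise μ T hT h h_meas hh_int,
      ae_all_iff.2 fun k => birkhoff_pointwise μ T hT (G k) (G_meas k) (G_int k)] with ω hg hb hB
    have bound : ∀ k N : ℕ, k ≤ N →
        |(∑ n ∈ Finset.range N, H (N - n) (T^[n] ω)) - ∑ n ∈ Finset.range N, h (T^[n] ω)|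
          ≤ (∑ n ∈ Finset.range N, G k (T^[n] ω)) +
            ((∑ n ∈ Finset.range N, G 0 (T^[n] ω)) - ∑ n ∈ Finset.range (N - k), G 0 (T^[n] ω)) := by
      intro k N hkN
      rw [← Finset.sum_sub_distrib]
      refine (Finset.abs_sum_le_sum_abs _ _).trans ?_
      have split : ∀ u : ℕ → ℝ, ∑ n ∈ Finset.range N, u n
          = ∑ n ∈ Finset.range (N - k), u n + ∑ n ∈ Finset.Ico (N - k) N, u n := fun u =>
        (Finset.sum_range_add_sum_Ico u (Nat.sub_le N k)).symm
      rw [split, split (fun n => G k (T^[n] ω)), split (fun n => G 0 (T^[n] ω))]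
      have p1 : ∑ n ∈ Finset.range (N - k), |H (N - n) (T^[n] ω) - h (T^[n] ω)|
          ≤ ∑ n ∈ Finset.range (N - k), G k (T^[n] ω) := by
        refine Finset.sum_le_sum fun n hn => ?_
        have hn' := Finset.mem_range.1 hn
        have := hg n k (N - n - k)
        rwa [Nat.sub_add_cancel (by omega)] at this
      have p2 : ∑ n ∈ Finset.Ico (N - k) N, |H (N - n) (T^[n] ω) - h (T^[n] ω)|
          ≤ ∑ n ∈ Finset.Ico (N - k) N, G 0 (T^[n] ω) :=
        Finset.sum_le_sum fun n _ => hg n 0 (N - n)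
      have p3 : 0 ≤ ∑ n ∈ Finset.Ico (N - k) N, G k (T^[n] ω) :=
        Finset.sum_nonneg fun n _ => G_nonneg _ _
      linarith
    rw [Metric.tendsto_nhds]
    intro ε hε
    obtain ⟨k, hk⟩ := (G_lim.eventually_lt_const (half_pos hε)).exists
    have hlim := (hB k).add ((hB 0).sub (shifted_average
      (a := fun N => ∑ n ∈ Finset.range N, G 0 (T^[n] ω)) k (hB 0)))
    rw [sub_self, add_zero] at hlim
    filter_upwards [hlim.eventually_lt_const hk, Metric.tendsto_nhds.1 hb (ε / 2) (half_pos hε),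
      eventually_ge_atTop k] with N h1 h2 h3
    have h4 := mul_le_mul_of_nonneg_left (bound k N h3) (inv_nonneg.2 (Nat.cast_nonneg (α := ℝ) N))
    rw [mul_add, mul_sub] at h4
    have h5 : dist ((N : ℝ)⁻¹ * ∑ n ∈ Finset.range N, H (N - n) (T^[n] ω))
        ((N : ℝ)⁻¹ * ∑ n ∈ Finset.range N, h (T^[n] ω)) < ε / 2 := by
      rw [Real.dist_eq, ← mul_sub, abs_mul, abs_of_nonneg (inv_nonneg.2 (Nat.cast_nonneg N))]
      linarith
    linarith [dist_triangle ((N : ℝ)⁻¹ * ∑ n ∈ Finset.range N, H (N - n) (T^[n] ω))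
      ((N : ℝ)⁻¹ * ∑ n ∈ Finset.range N, h (T^[n] ω)) (∫ x, h x ∂μ)]
  refine ⟨main, ?_⟩
  have F_nonneg : ∀ ω, 0 ≤ F ω := fun ω => Real.iSup_nonneg fun m => abs_nonneg _
  have hTm : ∀ n, Measurable (T^[n]) := fun n => hmp.measurable.iterate n
  have S_int : ∀ N : ℕ, Integrable
      (fun ω => (N : ℝ)⁻¹ * ∑ n ∈ Finset.range N, F (T^[n] ω)) μ := fun N =>
    (integrable_finset_sum _ fun n _ =>
      (hmp.iterate n).integrable_comp_of_integrable h_int).const_mul _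
  refine tendsto_zero_of_dominated μ _
    (fun N ω => (N : ℝ)⁻¹ * ∑ n ∈ Finset.range N, F (T^[n] ω) + |∫ x, h x ∂μ|)
    (∫ ω, F ω ∂μ + |∫ x, h x ∂μ|) ?_ ?_ ?_ ?_ ?_ ?_ ?_ ?_
  · intro N
    exact (((Finset.measurable_sum _ fun n _ => (H_meas _).comp (hTm n)).const_mul _).sub_const
      _).abs
  · intro N
    exact (S_int N).add (integrable_const _)
  · intro N ω
    exact abs_nonneg _
  · intro N
    filter_upwards [orbit HF] with ω ho
    refine (abs_sub _ _).trans ?_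
    rw [abs_mul, abs_of_nonneg (inv_nonneg.2 (Nat.cast_nonneg (α := ℝ) N))]
    gcongr
    exact (Finset.abs_sum_le_sum_abs _ _).trans (Finset.sum_le_sum fun n _ => ho n _)
  · filter_upwards [main] with ω hω
    simpa using (hω.sub_const (∫ x, h x ∂μ)).abs
  · filter_upwards [birkhoff_pointwise μ T hT F F_meas h_int] with ω hω
    exact hω.add_const _
  · filter_upwards [eventually_gt_atTop 0] with N hN
    rw [integral_add (S_int N) (integrable_const _), integral_birkhoff μ T hmp F F_meas h_int N hN]
    simp
  · exact add_nonneg (integral_nonneg F_nonneg) (abs_nonneg _)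
end

section
/- Fix x, y ∈ ℝ and σ > 0. Let X° be a random variable with Gaussian law N(x, σ²) and let ε be uniform on [0,1], independent of X°. Let φ denote the standard normal density and define Y° = X° if ε ≤ φ((X° − y)/σ)/φ((X° − x)/σ), and Y° = x + y − X° otherwise. Then Y° has Gaussian law N(y, σ²). -/
open ProbabilityTheory MeasureTheory

/-- The standard normal density `φ(t) = (2π)^{-1/2} exp(-t²/2)`. -/
noncomputable def stdNormalPDF (t : ℝ) : ℝ :=
  Real.exp (-t ^ 2 / 2) / Real.sqrt (2 * Real.pi)

lemma rc_Iic (r : ℝ) (hr : 0 ≤ r) :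
    (volume.restrict (Set.Icc (0 : ℝ) 1)) (Set.Iic r) = ENNReal.ofReal (min 1 r) := by
  rw [Measure.restrict_apply measurableSet_Iic]
  have : Set.Iic r ∩ Set.Icc (0 : ℝ) 1 = Set.Icc 0 (min 1 r) := by
    ext e
    simp only [Set.mem_inter_iff, Set.mem_Iic, Set.mem_Icc, le_min_iff]
    tauto
  rw [this, Real.volume_Icc, sub_zero]

lemma rc_Ioi (r : ℝ) (hr : 0 ≤ r) :
    (volume.restrict (Set.Icc (0 : ℝ) 1)) (Set.Ioi r) = ENNReal.ofReal (1 - min 1 r) := by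
  rw [Measure.restrict_apply measurableSet_Ioi]
  have : Set.Ioi r ∩ Set.Icc (0 : ℝ) 1 = Set.Ioc r 1 := by
    ext e
    simp only [Set.mem_inter_iff, Set.mem_Ioi, Set.mem_Icc, Set.mem_Ioc]
    constructor
    · rintro ⟨h, _, h'⟩
      exact ⟨h, h'⟩
    · rintro ⟨h, h'⟩
      exact ⟨h, by linarith, h'⟩
  rw [this, Real.volume_Ioc]
  rcases le_total 1 r with h | h
  · rw [min_eq_left h, ENNReal.ofReal_of_nonpos (by linarith), sub_self, ENNReal.ofReal_zero]
  · rw [min_eq_right h]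

lemma rc_section (r : ℝ) (hr : 0 ≤ r) (a b : ℝ) (S : Set ℝ) :
    (volume.restrict (Set.Icc (0 : ℝ) 1)) {e | (if e ≤ r then a else b) ∈ S} =
      S.indicator 1 a * ENNReal.ofReal (min 1 r)
        + S.indicator 1 b * ENNReal.ofReal (1 - min 1 r) := by
  by_cases ha : a ∈ S <;> by_cases hb : b ∈ S
  · have : {e | (if e ≤ r then a else b) ∈ S} = Set.univ := by
      ext e; by_cases h : e ≤ r <;> simp [h, ha, hb]
    rw [this]
    simp only [Set.indicator_of_mem ha, Set.indicator_of_mem hb, Pi.one_apply, one_mul]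
    rw [← ENNReal.ofReal_add (le_min zero_le_one hr) (by simp)]
    simp
  · have : {e | (if e ≤ r then a else b) ∈ S} = Set.Iic r := by
      ext e; by_cases h : e ≤ r <;> simp [h, ha, hb]
    rw [this, rc_Iic r hr]
    simp [ha, hb]
  · have : {e | (if e ≤ r then a else b) ∈ S} = Set.Ioi r := by
      ext e; by_cases h : e ≤ r <;> simp [h, ha, hb] <;> linarith
    rw [this, rc_Ioi r hr]
    simp [ha, hb]
  · have : {e | (if e ≤ r then a else b) ∈ S} = ∅ := by
      ext e; by_cases h : e ≤ r <;> simp [h, ha, hb]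
    rw [this]
    simp [ha, hb]

lemma rc_pdf (x σ u : ℝ) (hσ : 0 < σ) :
    gaussianPDFReal x ⟨σ ^ 2, sq_nonneg σ⟩ u = stdNormalPDF ((u - x) / σ) / σ := by
  unfold gaussianPDFReal stdNormalPDF
  have h1 : Real.sqrt (2 * Real.pi * σ ^ 2) = Real.sqrt (2 * Real.pi) * σ := by
    rw [Real.sqrt_mul (by positivity), Real.sqrt_sq hσ.le]
  have h2 : -(u - x) ^ 2 / (2 * σ ^ 2) = -((u - x) / σ) ^ 2 / 2 := by
    field_simp
  change (Real.sqrt (2 * Real.pi * σ ^ 2))⁻¹ * Real.exp (-(u - x) ^ 2 / (2 * σ ^ 2)) = _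
  rw [h1, h2]
  field_simp

/-- **The reflection coupling preserves the second marginal.**
Fix `x, y ∈ ℝ` and `σ > 0`.  If `X° ~ N(x, σ²)` and `ε ~ Unif[0,1]` are independent
(modelled by the product measure), and
`Y° = X°` if `ε ≤ φ((X°−y)/σ)/φ((X°−x)/σ)` and `Y° = x + y − X°` otherwise,
then `Y° ~ N(y, σ²)`. -/
theorem reflection_coupling_marginal (x y σ : ℝ) (hσ : 0 < σ) :
    Measure.map
      (fun p : ℝ × ℝ =>
        if p.2 ≤ stdNormalPDF ((p.1 - y) / σ) / stdNormalPDF ((p.1 - x) / σ) then p.1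
        else x + y - p.1)
      ((gaussianReal x ⟨σ ^ 2, sq_nonneg σ⟩).prod (volume.restrict (Set.Icc (0 : ℝ) 1))) =
    gaussianReal y ⟨σ ^ 2, sq_nonneg σ⟩ := by
  have hv : (⟨σ ^ 2, sq_nonneg σ⟩ : NNReal) ≠ 0 := by
    intro h
    have : σ ^ 2 = 0 := congrArg NNReal.toReal h
    exact (pow_pos hσ 2).ne' this
  have hpdfx := fun u => rc_pdf x σ u hσ
  have hpdfy := fun u => rc_pdf y σ u hσ
  have hp0 := fun u => gaussianPDFReal_pos x _ u hv
  have hq0 := fun u => gaussianPDFReal_pos y _ u hv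
  have hmp := measurable_gaussianPDFReal x ⟨σ ^ 2, sq_nonneg σ⟩
  have hmq := measurable_gaussianPDFReal y ⟨σ ^ 2, sq_nonneg σ⟩
  have hrefl : ∀ u, gaussianPDFReal x ⟨σ ^ 2, sq_nonneg σ⟩ (x + y - u)
      = gaussianPDFReal y ⟨σ ^ 2, sq_nonneg σ⟩ u := by
    intro u
    rw [hpdfx, hpdfy]
    unfold stdNormalPDF
    congr 4
    ring
  have hrefl' : ∀ u, gaussianPDFReal y ⟨σ ^ 2, sq_nonneg σ⟩ (x + y - u)
      = gaussianPDFReal x ⟨σ ^ 2, sq_nonneg σ⟩ u := by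
    intro u
    rw [← hrefl]
    congr 1
    ring
  have hratio : ∀ u, stdNormalPDF ((u - y) / σ) / stdNormalPDF ((u - x) / σ)
      = gaussianPDFReal y ⟨σ ^ 2, sq_nonneg σ⟩ u / gaussianPDFReal x ⟨σ ^ 2, sq_nonneg σ⟩ u := by
    intro u
    rw [hpdfx, hpdfy, div_div_div_cancel_right₀ hσ.ne']
  simp only [hratio]
  have hgx := gaussianReal_of_var_ne_zero x hv
  have hgy := gaussianReal_apply y hv
  have hGx : gaussianPDF x ⟨σ ^ 2, sq_nonneg σ⟩
    = fun u => ENNReal.ofReal (gaussianPDFReal x ⟨σ ^ 2, sq_nonneg σ⟩ u) := rfl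
  have hGy : gaussianPDF y ⟨σ ^ 2, sq_nonneg σ⟩
    = fun u => ENNReal.ofReal (gaussianPDFReal y ⟨σ ^ 2, sq_nonneg σ⟩ u) := rfl
  rw [hGx] at hgx
  rw [hGy] at hgy
  generalize gaussianPDFReal x ⟨σ ^ 2, sq_nonneg σ⟩ = p at *
  generalize gaussianPDFReal y ⟨σ ^ 2, sq_nonneg σ⟩ = q at *
  have hmeas : Measurable (fun z : ℝ × ℝ =>
      if z.2 ≤ q z.1 / p z.1 then z.1 else x + y - z.1) := by
    refine Measurable.ite (measurableSet_le measurable_snd ?_) measurable_fst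
      (measurable_const.sub measurable_fst)
    exact (hmq.comp measurable_fst).div (hmp.comp measurable_fst)
  ext S hS
  rw [Measure.map_apply hmeas hS, Measure.prod_apply (hmeas hS), hgy S]
  have hsec : ∀ u, (volume.restrict (Set.Icc (0 : ℝ) 1)) (Prod.mk u ⁻¹'
      ((fun z : ℝ × ℝ => if z.2 ≤ q z.1 / p z.1 then z.1 else x + y - z.1) ⁻¹' S)) =
      S.indicator 1 u * ENNReal.ofReal (min 1 (q u / p u))
        + S.indicator 1 (x + y - u) * ENNReal.ofReal (1 - min 1 (q u / p u)) := by
    intro u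
    exact rc_section (q u / p u) (div_pos (hq0 u) (hp0 u)).le u (x + y - u) S
  simp only [hsec]
  have hind : Measurable (S.indicator (1 : ℝ → ENNReal)) := measurable_one.indicator hS
  have hR : Measurable (fun u : ℝ => x + y - u) := measurable_const.sub measurable_id
  have hmr : Measurable (fun u => min 1 (q u / p u)) := measurable_const.min (hmq.div hmp)
  have hA : Measurable (fun u => S.indicator (1 : ℝ → ENNReal) u *
      ENNReal.ofReal (min (p u) (q u))) := hind.mul (hmp.min hmq).ennreal_ofReal
  have hB : Measurable (fun u => S.indicator (1 : ℝ → ENNReal) u *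
        ENNReal.ofReal (min 1 (q u / p u))
        + S.indicator 1 (x + y - u) * ENNReal.ofReal (1 - min 1 (q u / p u))) :=
    (hind.mul hmr.ennreal_ofReal).add
      ((hind.comp hR).mul (measurable_const.sub hmr).ennreal_ofReal)
  rw [hgx, lintegral_withDensity_eq_lintegral_mul _ hmp.ennreal_ofReal hB]
  have hpt : ∀ u, ((fun u => ENNReal.ofReal (p u)) * fun u =>
        S.indicator (1 : ℝ → ENNReal) u * ENNReal.ofReal (min 1 (q u / p u))
        + S.indicator 1 (x + y - u) * ENNReal.ofReal (1 - min 1 (q u / p u))) u =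
      S.indicator (1 : ℝ → ENNReal) u * ENNReal.ofReal (min (p u) (q u))
        + S.indicator 1 (x + y - u) * ENNReal.ofReal (p u - min (p u) (q u)) := by
    intro u
    have hmin : p u * min 1 (q u / p u) = min (p u) (q u) := by
      rw [mul_min_of_nonneg _ _ (hp0 u).le, mul_one, mul_div_cancel₀ _ (hp0 u).ne']
    have hmin' : p u * (1 - min 1 (q u / p u)) = p u - min (p u) (q u) := by
      rw [mul_sub, hmin, mul_one]
    rw [Pi.mul_apply, ← hmin', ← hmin, ENNReal.ofReal_mul (hp0 u).le,
      ENNReal.ofReal_mul (hp0 u).le]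
    ring
  rw [lintegral_congr hpt, lintegral_add_left hA]
  have hchange : ∫⁻ u, S.indicator (1 : ℝ → ENNReal) (x + y - u) *
        ENNReal.ofReal (p u - min (p u) (q u)) =
      ∫⁻ u, S.indicator (1 : ℝ → ENNReal) u * ENNReal.ofReal (q u - min (p u) (q u)) := by
    rw [← lintegral_sub_left_eq_self (fun u => S.indicator (1 : ℝ → ENNReal) u *
      ENNReal.ofReal (q u - min (p u) (q u))) (x + y)]
    refine lintegral_congr fun u => ?_
    simp only [hrefl, hrefl', min_comm]
  rw [hchange, ← lintegral_add_left hA, ← lintegral_indicator hS]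
  refine lintegral_congr fun u => ?_
  rw [← mul_add, ← ENNReal.ofReal_add (le_min (hp0 u).le (hq0 u).le) (by simp)]
  by_cases hu : u ∈ S <;> simp [hu]
end
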